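/- Fix an admissible control law and for 0 ≤ k ≤ N define x̂(k) = E[x(k) | σ(y(0),…,y(k−2))] (equal to 0 for k ≤ 1, since the conditioning record is empty) and x̃(k) = x(k) − x̂(k). Then for every k ≥ 1, almost surely x̃(k) = e¹(k) + (B F(k−1) + K¹(k−1)) ỹ(k−1), where e¹(k) = x(k) − x̂¹(k); moreover the random vectors x̂(k) and x̃(k) are independent. -/

import Mathlib

open MeasureTheory ProbabilityTheory Matrix Finset

noncomputable section

/-- Index type for vectors partitioned into three blocks of sizes `v 0, v 1, v 2`. -/
abbrev idx (v : Fin 3 → ℕ) : Type := Σ i : Fin 3, Fin (v i)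

/-- The block-index sets `S1 = {1,3}`, `S2 = {1,2}`, `S3 = {2,3}` (0-based:
`{0,2}, {0,1}, {1,2}`). -/
def Sset : Fin 3 → Finset (Fin 3) := ![{0, 2}, {0, 1}, {1, 2}]

/-- Index type for block rows/columns restricted to the blocks in `s`. -/
abbrev ridx (v : Fin 3 → ℕ) (s : Finset (Fin 3)) : Type := {a : idx v // a.1 ∈ s}

/-- A block-partitioned matrix is block diagonal when all off-diagonal blocks vanish. -/
def BlockDiag {v w : Fin 3 → ℕ} (M : Matrix (idx v) (idx w) ℝ) : Prop :=
  ∀ a b, a.1 ≠ b.1 → M a b = 0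

/-- A block-partitioned matrix has zero blocks in positions `(1,2), (2,3), (3,1)`
(1-based), i.e. in positions `(i, i+1 mod 3)` (0-based). -/
def CyclicSparse {v w : Fin 3 → ℕ} (M : Matrix (idx v) (idx w) ℝ) : Prop :=
  ∀ a b, b.1 = a.1 + 1 → M a b = 0

/-- `[M]_{s t}`: the submatrix of the block rows in `s` and block columns in `t`. -/
def subBB {v w : Fin 3 → ℕ} (M : Matrix (idx v) (idx w) ℝ) (s t : Finset (Fin 3)) :
    Matrix (ridx v s) (ridx w t) ℝ := fun a b => M a.1 b.1

/-- `[M]_{{1,2,3} t}`: all block rows, block columns restricted to `t`. -/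
def subCols {v w : Fin 3 → ℕ} (M : Matrix (idx v) (idx w) ℝ) (t : Finset (Fin 3)) :
    Matrix (idx v) (ridx w t) ℝ := fun a b => M a b.1

/-- `[M]ᵢ`: the `i`-th block row of `M`. -/
def blockRow {v w : Fin 3 → ℕ} (M : Matrix (idx v) (idx w) ℝ) (i : Fin 3) :
    Matrix (Fin (v i)) (idx w) ℝ := fun a b => M ⟨i, a⟩ b

variable {nv qv pv : Fin 3 → ℕ}

/-- The gain `K¹` of the three-player estimator, built from the error covariance `P`: its
`i`-th block row is supported on the block columns in `Sᵢ`, where it equals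
`[A]ᵢ [P]_{{1,2,3} Sᵢ} [C]ᵀ_{SᵢSᵢ} ([C]_{SᵢSᵢ}[P]_{SᵢSᵢ}[C]ᵀ_{SᵢSᵢ} + [V]_{SᵢSᵢ})⁻¹`. -/
def K1mat (A : Matrix (idx nv) (idx nv) ℝ) (C : Matrix (idx pv) (idx nv) ℝ)
    (V : Matrix (idx pv) (idx pv) ℝ) (P : Matrix (idx nv) (idx nv) ℝ) :
    Matrix (idx nv) (idx pv) ℝ := fun a b =>
  if h : b.1 ∈ Sset a.1 then
    (blockRow A a.1 * subCols P (Sset a.1) * (subBB C (Sset a.1) (Sset a.1))ᵀ *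
      (subBB C (Sset a.1) (Sset a.1) * subBB P (Sset a.1) (Sset a.1) *
        (subBB C (Sset a.1) (Sset a.1))ᵀ + subBB V (Sset a.1) (Sset a.1))⁻¹) a.2 ⟨b, h⟩
  else 0

/-- The standard Kalman gain `K = A P Cᵀ (C P Cᵀ + V)⁻¹`. -/
def Kgain (A : Matrix (idx nv) (idx nv) ℝ) (C : Matrix (idx pv) (idx nv) ℝ)
    (V : Matrix (idx pv) (idx pv) ℝ) (P : Matrix (idx nv) (idx nv) ℝ) :
    Matrix (idx nv) (idx pv) ℝ :=
  A * P * Cᵀ * (C * P * Cᵀ + V)⁻¹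

/-- The Kalman error covariance recursion `P(0) = P0`,
`P(k+1) = A P(k) Aᵀ + W − K(k) C P(k) Aᵀ`. -/
def Pmat (A : Matrix (idx nv) (idx nv) ℝ) (C : Matrix (idx pv) (idx nv) ℝ)
    (V : Matrix (idx pv) (idx pv) ℝ) (W P0 : Matrix (idx nv) (idx nv) ℝ) :
    ℕ → Matrix (idx nv) (idx nv) ℝ
  | 0 => P0
  | k + 1 =>
      A * Pmat A C V W P0 k * Aᵀ + W -
        Kgain A C V (Pmat A C V W P0 k) * (C * Pmat A C V W P0 k * Aᵀ)

variable {Ω : Type} [MeasurableSpace Ω]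

/-- The one-step Kalman predictor `x̂(k | k−1)`: `x̂(0 | −1) = 0` and
`x̂(k+1 | k) = A x̂(k | k−1) + B u(k) + K(k)(y(k) − C x̂(k | k−1))`. -/
def xpred (A : Matrix (idx nv) (idx nv) ℝ) (B : Matrix (idx nv) (idx qv) ℝ)
    (C : Matrix (idx pv) (idx nv) ℝ) (V : Matrix (idx pv) (idx pv) ℝ)
    (W P0 : Matrix (idx nv) (idx nv) ℝ)
    (u : ℕ → Ω → idx qv → ℝ) (y : ℕ → Ω → idx pv → ℝ) :
    ℕ → Ω → idx nv → ℝ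
  | 0 => fun _ => 0
  | k + 1 => fun ω =>
      A *ᵥ xpred A B C V W P0 u y k ω + B *ᵥ u k ω +
        Kgain A C V (Pmat A C V W P0 k) *ᵥ (y k ω - C *ᵥ xpred A B C V W P0 u y k ω)

/-- The innovation `ỹ(k) = y(k) − C x̂(k | k−1)`. -/
def innov (A : Matrix (idx nv) (idx nv) ℝ) (B : Matrix (idx nv) (idx qv) ℝ)
    (C : Matrix (idx pv) (idx nv) ℝ) (V : Matrix (idx pv) (idx pv) ℝ)
    (W P0 : Matrix (idx nv) (idx nv) ℝ)
    (u : ℕ → Ω → idx qv → ℝ) (y : ℕ → Ω → idx pv → ℝ) (k : ℕ) : Ω → idx pv → ℝ :=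
  fun ω => y k ω - C *ᵥ xpred A B C V W P0 u y k ω

/-- The improved local estimate
`x̂¹(k) = A x̂(k−1 | k−2) + B u(k−1) + K¹(k−1)(y(k−1) − C x̂(k−1 | k−2))` (for `k ≥ 1`). -/
def xh1 (A : Matrix (idx nv) (idx nv) ℝ) (B : Matrix (idx nv) (idx qv) ℝ)
    (C : Matrix (idx pv) (idx nv) ℝ) (V : Matrix (idx pv) (idx pv) ℝ)
    (W P0 : Matrix (idx nv) (idx nv) ℝ)
    (u : ℕ → Ω → idx qv → ℝ) (y : ℕ → Ω → idx pv → ℝ) (k : ℕ) : Ω → idx nv → ℝ :=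
  fun ω =>
    A *ᵥ xpred A B C V W P0 u y (k - 1) ω + B *ᵥ u (k - 1) ω +
      K1mat A C V (Pmat A C V W P0 (k - 1)) *ᵥ innov A B C V W P0 u y (k - 1) ω

/-- A random vector is (jointly) Gaussian when every linear functional of it has a
(possibly degenerate) one-dimensional Gaussian distribution. -/
def IsGaussianVec {d : Type} [Fintype d] (μ : Measure Ω) (X : Ω → d → ℝ) : Prop :=
  ∀ l : d → ℝ, ∃ m s, μ.map (fun ω => ∑ i, l i * X ω i) = gaussianReal m s

/-- The standing noise assumptions: `x(0), w(0),…,w(N−1), v(0),…,v(N−1)` are measurable,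
mutually independent and Gaussian with mean zero and covariances `P0`, `W`, `V`. -/
def NoiseOK (μ : Measure Ω) (N : ℕ) (P0 W : Matrix (idx nv) (idx nv) ℝ)
    (V : Matrix (idx pv) (idx pv) ℝ) (x0 : Ω → idx nv → ℝ)
    (w : ℕ → Ω → idx nv → ℝ) (v : ℕ → Ω → idx pv → ℝ) : Prop :=
  Measurable x0 ∧ (∀ k, Measurable (w k)) ∧ (∀ k, Measurable (v k)) ∧
  iIndep (fun i : Unit ⊕ Fin N ⊕ Fin N =>
    Sum.elim (fun _ => MeasurableSpace.comap x0 inferInstance)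
      (Sum.elim (fun k : Fin N => MeasurableSpace.comap (w ↑k) inferInstance)
        (fun k : Fin N => MeasurableSpace.comap (v ↑k) inferInstance)) i) μ ∧
  IsGaussianVec μ x0 ∧ (∀ k < N, IsGaussianVec μ (w k)) ∧ (∀ k < N, IsGaussianVec μ (v k)) ∧
  (∀ i, ∫ ω, x0 ω i ∂μ = 0) ∧ (∀ i j, ∫ ω, x0 ω i * x0 ω j ∂μ = P0 i j) ∧
  (∀ k < N, ∀ i, ∫ ω, w k ω i ∂μ = 0) ∧
  (∀ k < N, ∀ i j, ∫ ω, w k ω i * w k ω j ∂μ = W i j) ∧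
  (∀ k < N, ∀ i, ∫ ω, v k ω i ∂μ = 0) ∧
  (∀ k < N, ∀ i j, ∫ ω, v k ω i * v k ω j ∂μ = V i j)

/-- The closed-loop equations induced by the admissible control law `(F, G, Φ)`:
`x(k+1) = A x(k) + B u(k) + w(k)`, `y(k) = C x(k) + v(k)`, and
`u(k) = F(k) y(k) + G(k) y(k−1) + ∑_{j ≤ k−2} Φ(k,j) y(j)` (absent terms for `k = 0`). -/
def ClosedLoop (A : Matrix (idx nv) (idx nv) ℝ) (B : Matrix (idx nv) (idx qv) ℝ)
    (C : Matrix (idx pv) (idx nv) ℝ) (x0 : Ω → idx nv → ℝ)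
    (w : ℕ → Ω → idx nv → ℝ) (v : ℕ → Ω → idx pv → ℝ)
    (F G : ℕ → Matrix (idx qv) (idx pv) ℝ) (Φ : ℕ → ℕ → Matrix (idx qv) (idx pv) ℝ)
    (x : ℕ → Ω → idx nv → ℝ) (u : ℕ → Ω → idx qv → ℝ) (y : ℕ → Ω → idx pv → ℝ) : Prop :=
  (∀ ω, x 0 ω = x0 ω) ∧
  (∀ k, ∀ ω, x (k + 1) ω = A *ᵥ x k ω + B *ᵥ u k ω + w k ω) ∧
  (∀ k, ∀ ω, y k ω = C *ᵥ x k ω + v k ω) ∧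
  (∀ k, ∀ ω, u k ω = F k *ᵥ y k ω +
    (if 1 ≤ k then G k *ᵥ y (k - 1) ω else 0) +
    ∑ j ∈ Finset.range (k - 1), Φ k j *ᵥ y j ω)

/-- Sparsity constraints of the three-player information structure: `F(k)` block diagonal
and `G(k)` with zero blocks at `(1,2), (2,3), (3,1)`. -/
def Admissible (F G : ℕ → Matrix (idx qv) (idx pv) ℝ) : Prop :=
  (∀ k, BlockDiag (F k)) ∧ (∀ k, CyclicSparse (G k))

/-- `σ(y(0), …, y(k−2))`: the common two-step-delayed information. -/
def pastSigma (y : ℕ → Ω → idx pv → ℝ) (k : ℕ) : MeasurableSpace Ω :=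
  ⨆ j ∈ Finset.range (k - 1), MeasurableSpace.comap (y j) inferInstance

/-! ### Generic lemmas -/

/-- All components of a random vector lie in a given space of random variables. -/
def CompIn {d : Type} (S : Submodule ℝ (Ω → ℝ)) (X : Ω → d → ℝ) : Prop :=
  ∀ i, (fun ω => X ω i) ∈ S

lemma CompIn.mono {d : Type} {S T : Submodule ℝ (Ω → ℝ)} {X : Ω → d → ℝ} (hX : CompIn S X)
    (h : S ≤ T) : CompIn T X := fun i => h (hX i)

lemma CompIn.add {d : Type} {S : Submodule ℝ (Ω → ℝ)} {X Y : Ω → d → ℝ} (hX : CompIn S X)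
    (hY : CompIn S Y) : CompIn S (fun ω => X ω + Y ω) := fun i => S.add_mem (hX i) (hY i)

lemma CompIn.sub {d : Type} {S : Submodule ℝ (Ω → ℝ)} {X Y : Ω → d → ℝ} (hX : CompIn S X)
    (hY : CompIn S Y) : CompIn S (fun ω => X ω - Y ω) := fun i => S.sub_mem (hX i) (hY i)

lemma CompIn.zero {d : Type} {S : Submodule ℝ (Ω → ℝ)} :
    CompIn S (fun _ => (0 : d → ℝ)) := fun _ => S.zero_mem

lemma CompIn.sum {d ι : Type} {S : Submodule ℝ (Ω → ℝ)} {X : ι → Ω → d → ℝ} (s : Finset ι)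
    (hX : ∀ j ∈ s, CompIn S (X j)) : CompIn S (fun ω => ∑ j ∈ s, X j ω) := by
  intro i
  have : (fun ω => (∑ j ∈ s, X j ω) i) = ∑ j ∈ s, fun ω => X j ω i := by
    ext ω; simp
  rw [this]
  exact S.sum_mem fun j hj => hX j hj i

lemma CompIn.mulVec {d d' : Type} [Fintype d] {S : Submodule ℝ (Ω → ℝ)}
    {X : Ω → d → ℝ} (hX : CompIn S X) (M : Matrix d' d ℝ) : CompIn S (fun ω => M *ᵥ X ω) := by
  intro i
  have : (fun ω => (M *ᵥ X ω) i) = ∑ j, M i j • fun ω => X ω j := by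
    ext ω; simp [Matrix.mulVec, dotProduct]
  rw [this]
  exact S.sum_mem fun j _ => S.smul_mem _ (hX j)

/-- Square integrable random variables. -/
def L2sub (μ : Measure Ω) : Submodule ℝ (Ω → ℝ) where
  carrier := {f | MemLp f 2 μ}
  add_mem' ha hb := MemLp.add ha hb
  zero_mem' := MemLp.zero
  smul_mem' c _ h := MemLp.const_smul h c

/-- Measurable random variables. -/
def MeasSub (m : MeasurableSpace Ω) : Submodule ℝ (Ω → ℝ) where
  carrier := {f | Measurable[m] f}
  add_mem' ha hb := Measurable.add ha hb
  zero_mem' := measurable_const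
  smul_mem' c _ h := Measurable.const_smul h c

/-- Random variables orthogonal to `g`. -/
def OrthSub (μ : Measure Ω) (g : Ω → ℝ) : Submodule ℝ (Ω → ℝ) where
  carrier := {f | Integrable (fun ω => f ω * g ω) μ ∧ ∫ ω, f ω * g ω ∂μ = 0}
  add_mem' := by
    rintro a b ⟨ha, ha'⟩ ⟨hb, hb'⟩
    have : (fun ω => (a + b) ω * g ω) = fun ω => a ω * g ω + b ω * g ω := by
      ext ω; simp [add_mul]
    refine ⟨?_, ?_⟩
    · rw [this]; exact ha.add hb
    · simp only [this]; rw [integral_add ha hb, ha', hb', add_zero]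
  zero_mem' := by simp
  smul_mem' := by
    rintro c a ⟨ha, ha'⟩
    have : (fun ω => (c • a) ω * g ω) = fun ω => c * (a ω * g ω) := by
      ext ω; simp [mul_assoc]
    refine ⟨?_, ?_⟩
    · rw [this]; exact ha.const_mul c
    · simp only [this]; rw [integral_const_mul, ha', mul_zero]

/-- The (uncentred) second moment matrix. -/
def Cov {d d' : Type} (μ : Measure Ω) (X : Ω → d → ℝ) (Y : Ω → d' → ℝ) : Matrix d d' ℝ :=
  fun i j => ∫ ω, X ω i * Y ω j ∂μ

lemma Cov_transpose {d d' : Type} (μ : Measure Ω) (X : Ω → d → ℝ) (Y : Ω → d' → ℝ) :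
    (Cov μ X Y)ᵀ = Cov μ Y X := by
  ext i j; simp [Cov, mul_comm]

lemma L2_int {μ : Measure Ω} {f g : Ω → ℝ} (hf : f ∈ L2sub μ) (hg : g ∈ L2sub μ) :
    Integrable (fun ω => f ω * g ω) μ :=
  MemLp.integrable_mul (p := 2) (q := 2) hf hg

lemma Cov_add_left {d d' : Type} {μ : Measure Ω} {X Y : Ω → d → ℝ} {Z : Ω → d' → ℝ}
    (hX : CompIn (L2sub μ) X) (hY : CompIn (L2sub μ) Y) (hZ : CompIn (L2sub μ) Z) :
    Cov μ (fun ω => X ω + Y ω) Z = Cov μ X Z + Cov μ Y Z := by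
  ext i j
  simp only [Cov, Matrix.add_apply, Pi.add_apply, add_mul]
  exact integral_add (L2_int (hX i) (hZ j)) (L2_int (hY i) (hZ j))

lemma Cov_sub_left {d d' : Type} {μ : Measure Ω} {X Y : Ω → d → ℝ} {Z : Ω → d' → ℝ}
    (hX : CompIn (L2sub μ) X) (hY : CompIn (L2sub μ) Y) (hZ : CompIn (L2sub μ) Z) :
    Cov μ (fun ω => X ω - Y ω) Z = Cov μ X Z - Cov μ Y Z := by
  ext i j
  simp only [Cov, Matrix.sub_apply, Pi.sub_apply, sub_mul]
  exact integral_sub (L2_int (hX i) (hZ j)) (L2_int (hY i) (hZ j))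

lemma Cov_mul_left {d d' d'' : Type} [Fintype d] {μ : Measure Ω} {X : Ω → d → ℝ}
    {Z : Ω → d' → ℝ} (hX : CompIn (L2sub μ) X) (hZ : CompIn (L2sub μ) Z)
    (M : Matrix d'' d ℝ) :
    Cov μ (fun ω => M *ᵥ X ω) Z = M * Cov μ X Z := by
  ext i j
  simp only [Cov, Matrix.mul_apply, Matrix.mulVec, dotProduct, Finset.sum_mul, mul_assoc]
  rw [integral_finsetSum _ fun l _ => (L2_int (hX l) (hZ j)).const_mul _]
  simp only [integral_const_mul]

lemma Cov_add_right {d d' : Type} {μ : Measure Ω} {X Y : Ω → d → ℝ} {Z : Ω → d' → ℝ}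
    (hX : CompIn (L2sub μ) X) (hY : CompIn (L2sub μ) Y) (hZ : CompIn (L2sub μ) Z) :
    Cov μ Z (fun ω => X ω + Y ω) = Cov μ Z X + Cov μ Z Y := by
  rw [← Cov_transpose, Cov_add_left hX hY hZ, Matrix.transpose_add, Cov_transpose, Cov_transpose]

lemma Cov_sub_right {d d' : Type} {μ : Measure Ω} {X Y : Ω → d → ℝ} {Z : Ω → d' → ℝ}
    (hX : CompIn (L2sub μ) X) (hY : CompIn (L2sub μ) Y) (hZ : CompIn (L2sub μ) Z) :
    Cov μ Z (fun ω => X ω - Y ω) = Cov μ Z X - Cov μ Z Y := by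
  rw [← Cov_transpose, Cov_sub_left hX hY hZ, Matrix.transpose_sub, Cov_transpose, Cov_transpose]

lemma Cov_mul_right {d d' d'' : Type} [Fintype d] {μ : Measure Ω} {X : Ω → d → ℝ}
    {Z : Ω → d' → ℝ} (hX : CompIn (L2sub μ) X) (hZ : CompIn (L2sub μ) Z)
    (M : Matrix d'' d ℝ) :
    Cov μ Z (fun ω => M *ᵥ X ω) = Cov μ Z X * Mᵀ := by
  rw [← Cov_transpose, Cov_mul_left hX hZ, Matrix.transpose_mul, Cov_transpose]

lemma Cov_psd {d : Type} [Fintype d] {μ : Measure Ω} {X : Ω → d → ℝ}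
    (hX : CompIn (L2sub μ) X) : (Cov μ X X).PosSemidef := by
  refine Matrix.PosSemidef.of_dotProduct_mulVec_nonneg ?_ fun a => ?_
  · show (Cov μ X X)ᴴ = _
    rw [Matrix.conjTranspose_eq_transpose_of_trivial, Cov_transpose]
  · have h1 : Cov μ (fun ω => (Matrix.replicateRow Unit a) *ᵥ X ω)
        (fun ω => (Matrix.replicateRow Unit a) *ᵥ X ω) () () = star a ⬝ᵥ Cov μ X X *ᵥ a := by
      rw [Cov_mul_left hX (hX.mulVec _), Cov_mul_right hX hX, Matrix.dotProduct_mulVec,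
        ← Matrix.mul_assoc]
      simp [Matrix.mul_apply, Matrix.vecMul, dotProduct]
    rw [← h1]
    exact integral_nonneg fun ω => mul_self_nonneg _

/-- One step of the Kalman filter: the second moments. -/
lemma kalman_step {μ : Measure Ω} (A : Matrix (idx nv) (idx nv) ℝ)
    (C : Matrix (idx pv) (idx nv) ℝ) (V : Matrix (idx pv) (idx pv) ℝ)
    (W P : Matrix (idx nv) (idx nv) ℝ) (hV : V.PosDef)
    {e w : Ω → idx nv → ℝ} {v : Ω → idx pv → ℝ}
    (he : CompIn (L2sub μ) e) (hw : CompIn (L2sub μ) w) (hv : CompIn (L2sub μ) v)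
    (hee : Cov μ e e = P) (hew : Cov μ e w = 0) (hev : Cov μ e v = 0) (hwv : Cov μ w v = 0)
    (hww : Cov μ w w = W) (hvv : Cov μ v v = V) :
    Cov μ (fun ω => (A *ᵥ e ω + w ω) - Kgain A C V P *ᵥ (C *ᵥ e ω + v ω))
        (fun ω => C *ᵥ e ω + v ω) = 0 ∧
    Cov μ (fun ω => (A *ᵥ e ω + w ω) - Kgain A C V P *ᵥ (C *ᵥ e ω + v ω))
        (fun ω => (A *ᵥ e ω + w ω) - Kgain A C V P *ᵥ (C *ᵥ e ω + v ω)) =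
      A * P * Aᵀ + W - Kgain A C V P * (C * P * Aᵀ) := by
  have hy : CompIn (L2sub μ) (fun ω => C *ᵥ e ω + v ω) := (he.mulVec C).add hv
  have hz : CompIn (L2sub μ) (fun ω => A *ᵥ e ω + w ω) := (he.mulVec A).add hw
  have hKy := hy.mulVec (Kgain A C V P)
  have hwe : Cov μ w e = 0 := by rw [← Cov_transpose, hew, Matrix.transpose_zero]
  have hve : Cov μ v e = 0 := by rw [← Cov_transpose, hev, Matrix.transpose_zero]
  have hvw : Cov μ v w = 0 := by rw [← Cov_transpose, hwv, Matrix.transpose_zero]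
  have hP : P.PosSemidef := hee ▸ Cov_psd he
  have hpd : (C * P * Cᵀ + V).PosDef := by
    have := hP.mul_mul_conjTranspose_same C
    rw [Matrix.conjTranspose_eq_transpose_of_trivial] at this
    exact Matrix.PosDef.posSemidef_add this hV
  have hunit : IsUnit (C * P * Cᵀ + V).det := (Matrix.isUnit_iff_isUnit_det _).1 hpd.isUnit
  have hzy : Cov μ (fun ω => A *ᵥ e ω + w ω) (fun ω => C *ᵥ e ω + v ω) = A * P * Cᵀ := by
    rw [Cov_add_left (he.mulVec A) hw hy, Cov_mul_left he hy, Cov_add_right (he.mulVec C) hv he,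
      Cov_add_right (he.mulVec C) hv hw, Cov_mul_right he he, Cov_mul_right he hw]
    simp [hee, hew, hev, hwv, hwe, Matrix.mul_assoc]
  have hyy : Cov μ (fun ω => C *ᵥ e ω + v ω) (fun ω => C *ᵥ e ω + v ω) = C * P * Cᵀ + V := by
    rw [Cov_add_left (he.mulVec C) hv hy, Cov_mul_left he hy, Cov_add_right (he.mulVec C) hv he,
      Cov_add_right (he.mulVec C) hv hv, Cov_mul_right he he, Cov_mul_right he hv]
    simp [hee, hev, hve, hvv, Matrix.mul_assoc]
  have h0 : Cov μ (fun ω => (A *ᵥ e ω + w ω) - Kgain A C V P *ᵥ (C *ᵥ e ω + v ω))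
        (fun ω => C *ᵥ e ω + v ω) = 0 := by
    rw [Cov_sub_left hz hKy hy, Cov_mul_left hy hy, hzy, hyy, Kgain, Matrix.mul_assoc (A * P * Cᵀ),
      Matrix.nonsing_inv_mul _ hunit, Matrix.mul_one, sub_self]
  refine ⟨h0, ?_⟩
  rw [Cov_sub_right hz hKy (hz.sub hKy), Cov_mul_right hy (hz.sub hKy), h0, Matrix.zero_mul,
    sub_zero, Cov_sub_left hz hKy hz, Cov_mul_left hy hz]
  congr 1
  · rw [Cov_add_left (he.mulVec A) hw hz, Cov_mul_left he hz, Cov_add_right (he.mulVec A) hw he,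
      Cov_add_right (he.mulVec A) hw hw, Cov_mul_right he he, Cov_mul_right he hw]
    simp [hee, hew, hwe, hww, Matrix.mul_assoc]
  · congr 1
    rw [Cov_add_left (he.mulVec C) hv hz, Cov_mul_left he hz, Cov_add_right (he.mulVec A) hw he,
      Cov_add_right (he.mulVec A) hw hv, Cov_mul_right he he, Cov_mul_right he hv]
    simp [hee, hew, hve, hvw, Matrix.mul_assoc]

/-! ### The noise space -/

/-- Span of `x(0)`, `w(0..k-1)`, `v(0..k-1)`. -/
def noiseSpan (x0 : Ω → idx nv → ℝ) (w : ℕ → Ω → idx nv → ℝ) (v : ℕ → Ω → idx pv → ℝ)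
    (k : ℕ) : Submodule ℝ (Ω → ℝ) :=
  Submodule.span ℝ {f | (∃ i, f = fun ω => x0 ω i) ∨ (∃ j < k, ∃ i, f = fun ω => w j ω i) ∨
    (∃ j < k, ∃ i, f = fun ω => v j ω i)}

lemma noiseSpan_le {x0 : Ω → idx nv → ℝ} {w : ℕ → Ω → idx nv → ℝ} {v : ℕ → Ω → idx pv → ℝ}
    {k : ℕ} {S : Submodule ℝ (Ω → ℝ)} (h0 : CompIn S x0) (hw : ∀ j < k, CompIn S (w j))
    (hv : ∀ j < k, CompIn S (v j)) : noiseSpan x0 w v k ≤ S := by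
  refine Submodule.span_le.2 ?_
  rintro f (⟨i, rfl⟩ | ⟨j, hj, i, rfl⟩ | ⟨j, hj, i, rfl⟩)
  · exact h0 i
  · exact hw j hj i
  · exact hv j hj i

lemma noiseSpan_x0 {x0 : Ω → idx nv → ℝ} {w : ℕ → Ω → idx nv → ℝ} {v : ℕ → Ω → idx pv → ℝ}
    {k : ℕ} : CompIn (noiseSpan x0 w v k) x0 :=
  fun i => Submodule.subset_span (Or.inl ⟨i, rfl⟩)

lemma noiseSpan_w {x0 : Ω → idx nv → ℝ} {w : ℕ → Ω → idx nv → ℝ} {v : ℕ → Ω → idx pv → ℝ}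
    {k j : ℕ} (h : j < k) : CompIn (noiseSpan x0 w v k) (w j) :=
  fun i => Submodule.subset_span (Or.inr (Or.inl ⟨j, h, i, rfl⟩))

lemma noiseSpan_v {x0 : Ω → idx nv → ℝ} {w : ℕ → Ω → idx nv → ℝ} {v : ℕ → Ω → idx pv → ℝ}
    {k j : ℕ} (h : j < k) : CompIn (noiseSpan x0 w v k) (v j) :=
  fun i => Submodule.subset_span (Or.inr (Or.inr ⟨j, h, i, rfl⟩))

lemma noiseSpan_mono {x0 : Ω → idx nv → ℝ} {w : ℕ → Ω → idx nv → ℝ} {v : ℕ → Ω → idx pv → ℝ}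
    {k l : ℕ} (h : k ≤ l) : noiseSpan x0 w v k ≤ noiseSpan x0 w v l :=
  noiseSpan_le noiseSpan_x0 (fun _ hj => noiseSpan_w (hj.trans_le h))
    (fun _ hj => noiseSpan_v (hj.trans_le h))

lemma IsGaussianVec.hasGaussianLaw {d : Type} [Fintype d] {μ : Measure Ω} {X : Ω → d → ℝ}
    (h : IsGaussianVec μ X) (hX : Measurable X) : HasGaussianLaw X μ := by
  classical
  refine ⟨isGaussian_of_map_eq_gaussianReal fun L => ?_⟩
  obtain ⟨m, s, hms⟩ := h fun i => L fun j => if i = j then 1 else 0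
  refine ⟨m, s, ?_⟩
  rw [Measure.map_map (by fun_prop) hX, ← hms]
  congr 1
  ext ω
  have := LinearMap.pi_apply_eq_sum_univ (L : (d → ℝ) →ₗ[ℝ] ℝ) (X ω)
  simp only [ContinuousLinearMap.coe_coe] at this
  simp only [Function.comp, this, smul_eq_mul, mul_comm]

/-- Block sizes of the members of the noise family. -/
def ndim (nv pv : Fin 3 → ℕ) (N : ℕ) : Unit ⊕ Fin N ⊕ Fin N → Fin 3 → ℕ
  | .inl _ => nv
  | .inr (.inl _) => nv
  | .inr (.inr _) => pv

/-- The noise family. -/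
def nfam (N : ℕ) (x0 : Ω → idx nv → ℝ) (w : ℕ → Ω → idx nv → ℝ) (v : ℕ → Ω → idx pv → ℝ) :
    (i : Unit ⊕ Fin N ⊕ Fin N) → Ω → idx (ndim nv pv N i) → ℝ
  | .inl _ => x0
  | .inr (.inl k) => w k
  | .inr (.inr k) => v k

section noise

variable {μ : Measure Ω} {N : ℕ} {P0 W : Matrix (idx nv) (idx nv) ℝ}
    {V : Matrix (idx pv) (idx pv) ℝ} {x0 : Ω → idx nv → ℝ}
    {w : ℕ → Ω → idx nv → ℝ} {v : ℕ → Ω → idx pv → ℝ}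

lemma nfam_indep (h : NoiseOK μ N P0 W V x0 w v) : iIndepFun (nfam N x0 w v) μ := by
  have h1 := h.2.2.2.1
  show iIndep (fun i => MeasurableSpace.comap (nfam N x0 w v i) inferInstance) μ
  have heq : (fun i => MeasurableSpace.comap (nfam N x0 w v i) inferInstance) =
      (fun i : Unit ⊕ Fin N ⊕ Fin N =>
        Sum.elim (fun _ => MeasurableSpace.comap x0 inferInstance)
          (Sum.elim (fun k : Fin N => MeasurableSpace.comap (w ↑k) inferInstance)
            (fun k : Fin N => MeasurableSpace.comap (v ↑k) inferInstance)) i) := by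
    funext i
    rcases i with i | i | i <;> rfl
  rw [heq]
  exact h1

lemma nfam_gauss (h : NoiseOK μ N P0 W V x0 w v) :
    HasGaussianLaw (fun ω i => nfam N x0 w v i ω) μ := by
  have hi := nfam_indep h
  obtain ⟨m0, mw, mv, -, g0, gw, gv, -⟩ := h
  refine iIndepFun.hasGaussianLaw (X := nfam N x0 w v) (fun i => ?_) hi
  rcases i with i | i | i
  · exact g0.hasGaussianLaw m0
  · exact (gw i i.2).hasGaussianLaw (mw i)
  · exact (gv i i.2).hasGaussianLaw (mv i)

/-- Continuous linear functionals of the noise family. -/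
def linSub (N : ℕ) (x0 : Ω → idx nv → ℝ) (w : ℕ → Ω → idx nv → ℝ) (v : ℕ → Ω → idx pv → ℝ) :
    Submodule ℝ (Ω → ℝ) where
  carrier := {f | ∃ l : ((i : Unit ⊕ Fin N ⊕ Fin N) → idx (ndim nv pv N i) → ℝ) →L[ℝ] ℝ,
    f = fun ω => l (fun i => nfam N x0 w v i ω)}
  add_mem' := by
    rintro _ _ ⟨l, rfl⟩ ⟨l', rfl⟩
    exact ⟨l + l', by ext ω; simp⟩
  zero_mem' := ⟨0, by ext ω; simp⟩
  smul_mem' := by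
    rintro c _ ⟨l, rfl⟩
    exact ⟨c • l, by ext ω; simp⟩

lemma noiseSpan_le_linSub : noiseSpan x0 w v N ≤ linSub N x0 w v := by
  have key : ∀ i, CompIn (linSub N x0 w v) (nfam N x0 w v i) := fun i a =>
    ⟨(ContinuousLinearMap.proj (R := ℝ) (φ := fun _ : idx (ndim nv pv N i) => ℝ) a).comp
      (ContinuousLinearMap.proj (R := ℝ)
        (φ := fun i : Unit ⊕ Fin N ⊕ Fin N => idx (ndim nv pv N i) → ℝ) i), rfl⟩
  exact noiseSpan_le (key (.inl ())) (fun j hj => key (.inr (.inl ⟨j, hj⟩)))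
    (fun j hj => key (.inr (.inr ⟨j, hj⟩)))

lemma noise_gauss {d d' : Type} [Fintype d] [Fintype d'] (h : NoiseOK μ N P0 W V x0 w v)
    {X : Ω → d → ℝ} (hX : CompIn (noiseSpan x0 w v N) X)
    {Y : Ω → d' → ℝ} (hY : CompIn (noiseSpan x0 w v N) Y) :
    HasGaussianLaw (fun ω => (X ω, Y ω)) μ := by
  have h1 := fun i => noiseSpan_le_linSub (hX i)
  have h2 := fun i => noiseSpan_le_linSub (hY i)
  choose l hl using h1
  choose l' hl' using h2
  have := (nfam_gauss h).map_fun ((ContinuousLinearMap.pi l).prod (ContinuousLinearMap.pi l'))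
  refine this.congr (Filter.Eventually.of_forall fun ω => ?_)
  refine Prod.ext ?_ ?_
  · funext i
    exact (congrFun (hl i) ω).symm
  · funext i
    exact (congrFun (hl' i) ω).symm

lemma noise_L2 (h : NoiseOK μ N P0 W V x0 w v) : noiseSpan x0 w v N ≤ L2sub μ := by
  intro f hf
  have hX : CompIn (noiseSpan x0 w v N) (fun ω (_ : Unit) => f ω) := fun _ => hf
  have := (noise_gauss h hX hX).fst
  exact (HasGaussianLaw.memLp_two this).eval ()

lemma noise_meas (h : NoiseOK μ N P0 W V x0 w v) : noiseSpan x0 w v N ≤ MeasSub ‹_› := by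
  obtain ⟨m0, mw, mv, -⟩ := h
  exact noiseSpan_le (fun i => (measurable_pi_apply i).comp m0)
    (fun j _ i => (measurable_pi_apply i).comp (mw j))
    (fun j _ i => (measurable_pi_apply i).comp (mv j))

lemma noise_mean [IsProbabilityMeasure μ] (h : NoiseOK μ N P0 W V x0 w v) :
    noiseSpan x0 w v N ≤ OrthSub μ (fun _ => 1) := by
  have hL {f : Ω → ℝ} (hf : f ∈ noiseSpan x0 w v N) : Integrable (fun ω => f ω * 1) μ := by
    simpa using (noise_L2 h hf : MemLp f 2 μ).integrable (by norm_num)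
  obtain ⟨-, -, -, -, -, -, -, e0, -, ew, -, ev, -⟩ := h
  exact noiseSpan_le (fun i => ⟨hL (noiseSpan_x0 i), by simpa using e0 i⟩)
    (fun j hj i => ⟨hL (noiseSpan_w hj i), by simpa using ew j hj i⟩)
    (fun j hj i => ⟨hL (noiseSpan_v hj i), by simpa using ev j hj i⟩)

lemma nfam_orth [IsProbabilityMeasure μ] (h : NoiseOK μ N P0 W V x0 w v)
    {a b : Unit ⊕ Fin N ⊕ Fin N} (hab : a ≠ b) (i) (j) :
    (fun ω => nfam N x0 w v a ω i) ∈ OrthSub μ (fun ω => nfam N x0 w v b ω j) := by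
  have key : ∀ i, CompIn (noiseSpan x0 w v N) (nfam N x0 w v i) := by
    rintro (i | i | i)
    · exact noiseSpan_x0
    · exact noiseSpan_w i.2
    · exact noiseSpan_v i.2
  have hi := ((nfam_indep h).indepFun hab).comp (measurable_pi_apply i) (measurable_pi_apply j)
  refine ⟨L2_int (noise_L2 h (key a i)) (noise_L2 h (key b j)), ?_⟩
  have h1 := IndepFun.integral_fun_mul_eq_mul_integral hi
    (noise_L2 h (key a i) : MemLp _ 2 μ).1 (noise_L2 h (key b j) : MemLp _ 2 μ).1
  refine h1.trans ?_
  have h2 := (noise_mean h (key a i)).2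
  simp only [mul_one] at h2
  have h3 : ∫ ω, ((fun g => g i) ∘ nfam N x0 w v a) ω ∂μ = 0 := h2
  rw [h3, zero_mul]

lemma noise_orth_w [IsProbabilityMeasure μ] (h : NoiseOK μ N P0 W V x0 w v) {k : ℕ} (hk : k < N)
    (i) : noiseSpan x0 w v k ≤ OrthSub μ (fun ω => w k ω i) := by
  refine noiseSpan_le (fun a => ?_) (fun j hj a => ?_) (fun j hj a => ?_)
  · exact nfam_orth h (a := .inl ()) (b := .inr (.inl ⟨k, hk⟩)) (by simp) a i
  · exact nfam_orth h (a := .inr (.inl ⟨j, hj.trans hk⟩)) (b := .inr (.inl ⟨k, hk⟩))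
      (by simp; omega) a i
  · exact nfam_orth h (a := .inr (.inr ⟨j, hj.trans hk⟩)) (b := .inr (.inl ⟨k, hk⟩))
      (by simp) a i

lemma noise_orth_v [IsProbabilityMeasure μ] (h : NoiseOK μ N P0 W V x0 w v) {k : ℕ} (hk : k < N)
    (i) : noiseSpan x0 w v k ≤ OrthSub μ (fun ω => v k ω i) := by
  refine noiseSpan_le (fun a => ?_) (fun j hj a => ?_) (fun j hj a => ?_)
  · exact nfam_orth h (a := .inl ()) (b := .inr (.inr ⟨k, hk⟩)) (by simp) a i
  · exact nfam_orth h (a := .inr (.inl ⟨j, hj.trans hk⟩)) (b := .inr (.inr ⟨k, hk⟩))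
      (by simp) a i
  · exact nfam_orth h (a := .inr (.inr ⟨j, hj.trans hk⟩)) (b := .inr (.inr ⟨k, hk⟩))
      (by simp; omega) a i

lemma noise_cov_w {d : Type} [IsProbabilityMeasure μ] (h : NoiseOK μ N P0 W V x0 w v) {k : ℕ}
    (hk : k < N) {X : Ω → d → ℝ} (hX : CompIn (noiseSpan x0 w v k) X) : Cov μ X (w k) = 0 := by
  ext i j
  exact (noise_orth_w h hk j (hX i)).2

lemma noise_cov_v {d : Type} [IsProbabilityMeasure μ] (h : NoiseOK μ N P0 W V x0 w v) {k : ℕ}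
    (hk : k < N) {X : Ω → d → ℝ} (hX : CompIn (noiseSpan x0 w v k) X) : Cov μ X (v k) = 0 := by
  ext i j
  exact (noise_orth_v h hk j (hX i)).2

lemma noise_cov_wv [IsProbabilityMeasure μ] (h : NoiseOK μ N P0 W V x0 w v) {k : ℕ}
    (hk : k < N) : Cov μ (w k) (v k) = 0 := by
  ext i j
  exact (nfam_orth h (a := .inr (.inl ⟨k, hk⟩)) (b := .inr (.inr ⟨k, hk⟩)) (by simp) i j).2

end noise

/-! ### The closed loop -/

/-- Span of `y(0..k-1)`. -/
def obsSpan (y : ℕ → Ω → idx pv → ℝ) (k : ℕ) : Submodule ℝ (Ω → ℝ) :=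
  Submodule.span ℝ {f | ∃ j < k, ∃ i, f = fun ω => y j ω i}

lemma obsSpan_le {y : ℕ → Ω → idx pv → ℝ} {k : ℕ} {S : Submodule ℝ (Ω → ℝ)}
    (h : ∀ j < k, CompIn S (y j)) : obsSpan y k ≤ S := by
  refine Submodule.span_le.2 ?_
  rintro f ⟨j, hj, i, rfl⟩
  exact h j hj i

lemma obsSpan_y {y : ℕ → Ω → idx pv → ℝ} {k j : ℕ} (h : j < k) : CompIn (obsSpan y k) (y j) :=
  fun i => Submodule.subset_span ⟨j, h, i, rfl⟩

lemma obsSpan_mono {y : ℕ → Ω → idx pv → ℝ} {k l : ℕ} (h : k ≤ l) : obsSpan y k ≤ obsSpan y l :=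
  obsSpan_le fun _ hj => obsSpan_y (hj.trans_le h)

section loop

variable {μ : Measure Ω} {N : ℕ} {P0 W : Matrix (idx nv) (idx nv) ℝ}
    {V : Matrix (idx pv) (idx pv) ℝ} {x0 : Ω → idx nv → ℝ}
    {w : ℕ → Ω → idx nv → ℝ} {v : ℕ → Ω → idx pv → ℝ}
    {A : Matrix (idx nv) (idx nv) ℝ} {B : Matrix (idx nv) (idx qv) ℝ}
    {C : Matrix (idx pv) (idx nv) ℝ}
    {F G : ℕ → Matrix (idx qv) (idx pv) ℝ} {Φ : ℕ → ℕ → Matrix (idx qv) (idx pv) ℝ}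
    {x : ℕ → Ω → idx nv → ℝ} {u : ℕ → Ω → idx qv → ℝ} {y : ℕ → Ω → idx pv → ℝ}

/-- The part of the control that depends on `y(0..k-1)` only. -/
def upast (G : ℕ → Matrix (idx qv) (idx pv) ℝ) (Φ : ℕ → ℕ → Matrix (idx qv) (idx pv) ℝ)
    (y : ℕ → Ω → idx pv → ℝ) (k : ℕ) : Ω → idx qv → ℝ := fun ω =>
  (if 1 ≤ k then G k *ᵥ y (k - 1) ω else 0) + ∑ j ∈ Finset.range (k - 1), Φ k j *ᵥ y j ω

lemma upast_mem (k : ℕ) : CompIn (obsSpan y k) (upast G Φ y k) := by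
  refine CompIn.add ?_ (CompIn.sum _ fun j hj => (obsSpan_y ?_).mulVec _)
  · by_cases hk : 1 ≤ k
    · simp only [hk, if_true]
      exact (obsSpan_y (by omega)).mulVec _
    · simp only [hk, if_false]
      exact CompIn.zero
  · have := Finset.mem_range.1 hj
    omega

lemma u_eq (hcl : ClosedLoop A B C x0 w v F G Φ x u y) (k : ℕ) :
    u k = fun ω => F k *ᵥ y k ω + upast G Φ y k ω := by
  funext ω
  rw [hcl.2.2.2 k ω, upast, add_assoc]

lemma u_mem (hcl : ClosedLoop A B C x0 w v F G Φ x u y) (k : ℕ) :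
    CompIn (obsSpan y (k + 1)) (u k) := by
  rw [u_eq hcl]
  exact ((obsSpan_y (Nat.lt_succ_self k)).mulVec _).add
    ((upast_mem k).mono (obsSpan_mono (Nat.le_succ k)))

lemma xpred_mem (hcl : ClosedLoop A B C x0 w v F G Φ x u y) (k : ℕ) :
    CompIn (obsSpan y k) (xpred A B C V W P0 u y k) := by
  induction k with
  | zero => exact CompIn.zero
  | succ k ih =>
    have ih' := ih.mono (obsSpan_mono (Nat.le_succ k))
    exact ((ih'.mulVec A).add ((u_mem hcl k).mulVec B)).add
      (((obsSpan_y (Nat.lt_succ_self k)).sub (ih'.mulVec C)).mulVec _)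

lemma xy_mem (hcl : ClosedLoop A B C x0 w v F G Φ x u y) (k : ℕ) :
    CompIn (noiseSpan x0 w v k) (x k) ∧ obsSpan y k ≤ noiseSpan x0 w v k := by
  have hxs : ∀ k, x (k + 1) = fun ω => A *ᵥ x k ω + B *ᵥ u k ω + w k ω :=
    fun k => funext (hcl.2.1 k)
  have hys : ∀ k, y k = fun ω => C *ᵥ x k ω + v k ω := fun k => funext (hcl.2.2.1 k)
  induction k with
  | zero =>
    refine ⟨?_, obsSpan_le fun j hj => absurd hj (Nat.not_lt_zero j)⟩
    rw [show x 0 = x0 from funext hcl.1]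
    exact noiseSpan_x0
  | succ k ih =>
    have hx := ih.1.mono (noiseSpan_mono (Nat.le_succ k))
    have hy : CompIn (noiseSpan x0 w v (k + 1)) (y k) := by
      rw [hys]
      exact (hx.mulVec C).add (noiseSpan_v (Nat.lt_succ_self k))
    have hY : obsSpan y (k + 1) ≤ noiseSpan x0 w v (k + 1) := by
      refine obsSpan_le fun j hj => ?_
      rcases Nat.lt_succ_iff_lt_or_eq.1 hj with h | rfl
      · exact ((obsSpan_y h).mono ih.2).mono (noiseSpan_mono (Nat.le_succ k))
      · exact hy
    refine ⟨?_, hY⟩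
    rw [hxs]
    exact ((hx.mulVec A).add (((u_mem hcl k).mono hY).mulVec B)).add
      (noiseSpan_w (Nat.lt_succ_self k))

lemma err_mem (hcl : ClosedLoop A B C x0 w v F G Φ x u y) (k : ℕ) :
    CompIn (noiseSpan x0 w v k) (fun ω => x k ω - xpred A B C V W P0 u y k ω) :=
  (xy_mem hcl k).1.sub ((xpred_mem hcl k).mono (xy_mem hcl k).2)

lemma cov_obs_zero {d d' : Type} {X : Ω → d → ℝ} {k : ℕ}
    (hX : CompIn (L2sub μ) X) (hL : obsSpan y k ≤ L2sub μ)
    (h : ∀ j < k, Cov μ X (y j) = 0) {Z : Ω → d' → ℝ} (hZ : CompIn (obsSpan y k) Z) :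
    Cov μ X Z = 0 := by
  ext i j
  have hle : obsSpan y k ≤ OrthSub μ (fun ω => X ω i) := by
    refine obsSpan_le fun l hl a => ⟨L2_int (hL (obsSpan_y hl a)) (hX i), ?_⟩
    have h1 := congrFun (congrFun (h l hl) i) a
    simpa [Cov, mul_comm] using h1
  have := (hle (hZ j)).2
  simpa [Cov, mul_comm] using this

lemma kalman_inv [IsProbabilityMeasure μ] (hV : V.PosDef) (hn : NoiseOK μ N P0 W V x0 w v)
    (hcl : ClosedLoop A B C x0 w v F G Φ x u y) (k : ℕ) (hk : k ≤ N) :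
    Cov μ (fun ω => x k ω - xpred A B C V W P0 u y k ω)
      (fun ω => x k ω - xpred A B C V W P0 u y k ω) = Pmat A C V W P0 k ∧
    ∀ j < k, Cov μ (fun ω => x k ω - xpred A B C V W P0 u y k ω) (y j) = 0 := by
  induction k with
  | zero =>
    refine ⟨?_, fun j hj => absurd hj (Nat.not_lt_zero j)⟩
    ext i j
    have h0 := hn.2.2.2.2.2.2.2.2.1 i j
    simpa [Cov, xpred, Pmat, hcl.1] using h0
  | succ k ih =>
    obtain ⟨ihP, ihy⟩ := ih (Nat.le_of_succ_le hk)
    have hkN : k < N := hk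
    have hL2 := noise_L2 hn
    set e : Ω → idx nv → ℝ := fun ω => x k ω - xpred A B C V W P0 u y k ω with he
    have hem : CompIn (noiseSpan x0 w v k) e := err_mem hcl k
    have heL : CompIn (L2sub μ) e := (hem.mono (noiseSpan_mono hkN.le)).mono hL2
    have hwL : CompIn (L2sub μ) (w k) := (noiseSpan_w hkN).mono hL2
    have hvL : CompIn (L2sub μ) (v k) := (noiseSpan_v hkN).mono hL2
    have hobs : obsSpan y k ≤ L2sub μ :=
      ((xy_mem hcl k).2.trans (noiseSpan_mono hkN.le)).trans hL2
    have hinn : ∀ ω, y k ω - C *ᵥ xpred A B C V W P0 u y k ω = C *ᵥ e ω + v k ω := by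
      intro ω
      rw [hcl.2.2.1 k ω, he, Matrix.mulVec_sub]
      abel
    have hnext : (fun ω => x (k + 1) ω - xpred A B C V W P0 u y (k + 1) ω) =
        fun ω => (A *ᵥ e ω + w k ω) -
          Kgain A C V (Pmat A C V W P0 k) *ᵥ (C *ᵥ e ω + v k ω) := by
      funext ω
      have hxp : xpred A B C V W P0 u y (k + 1) ω = A *ᵥ xpred A B C V W P0 u y k ω + B *ᵥ u k ω +
        Kgain A C V (Pmat A C V W P0 k) *ᵥ (y k ω - C *ᵥ xpred A B C V W P0 u y k ω) := rfl
      have hAe : A *ᵥ e ω = A *ᵥ x k ω - A *ᵥ xpred A B C V W P0 u y k ω := by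
        rw [he, Matrix.mulVec_sub]
      rw [hxp, hcl.2.1 k ω, hinn ω, hAe]
      abel
    have hnoise := hn
    obtain ⟨-, -, -, -, -, -, -, -, -, -, cw, -, cv⟩ := hnoise
    have hstep := kalman_step A C V W (Pmat A C V W P0 k) hV heL hwL hvL ihP
      (noise_cov_w hn hkN hem) (noise_cov_v hn hkN hem) (noise_cov_wv hn hkN)
      (by ext i j; exact cw k hkN i j) (by ext i j; exact cv k hkN i j)
    rw [hnext]
    refine ⟨hstep.2, ?_⟩
    have hyL : CompIn (L2sub μ) (fun ω => C *ᵥ e ω + v k ω) := (heL.mulVec C).add hvL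
    have hzL : CompIn (L2sub μ) (fun ω => A *ᵥ e ω + w k ω) := (heL.mulVec A).add hwL
    have hKL := hyL.mulVec (Kgain A C V (Pmat A C V W P0 k))
    have hold : ∀ j < k, Cov μ (fun ω => (A *ᵥ e ω + w k ω) -
          Kgain A C V (Pmat A C V W P0 k) *ᵥ (C *ᵥ e ω + v k ω)) (y j) = 0 := by
      intro j hj
      have hyj : CompIn (L2sub μ) (y j) := (obsSpan_y hj).mono hobs
      have hyn : CompIn (noiseSpan x0 w v k) (y j) := (obsSpan_y hj).mono (xy_mem hcl k).2
      have h1 : Cov μ (w k) (y j) = 0 := by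
        rw [← Cov_transpose, noise_cov_w hn hkN hyn, Matrix.transpose_zero]
      have h2 : Cov μ (v k) (y j) = 0 := by
        rw [← Cov_transpose, noise_cov_v hn hkN hyn, Matrix.transpose_zero]
      rw [Cov_sub_left hzL hKL hyj, Cov_mul_left hyL hyj, Cov_add_left (heL.mulVec A) hwL hyj,
        Cov_add_left (heL.mulVec C) hvL hyj, Cov_mul_left heL hyj, Cov_mul_left heL hyj,
        ihy j hj, h1, h2]
      simp
    intro j hj
    rcases Nat.lt_succ_iff_lt_or_eq.1 hj with h | rfl
    · exact hold j h
    · have hyk : y j = fun ω => (C *ᵥ e ω + v j ω) + C *ᵥ xpred A B C V W P0 u y j ω := by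
        funext ω
        rw [← hinn ω]
        abel
      have hxp := (xpred_mem (V := V) (W := W) (P0 := P0) hcl j).mulVec C
      rw [hyk, Cov_add_right hyL (hxp.mono hobs) (hzL.sub hKL), hstep.1,
        cov_obs_zero (hzL.sub hKL) hobs hold hxp, add_zero]

end loop

/-- with `x̂(k) = E[x(k) | σ(y(0),…,y(k−2))]` and `x̃(k) = x(k) − x̂(k)`,
for every `k ≥ 1` one has almost surely
`x̃(k) = e¹(k) + (B F(k−1) + K¹(k−1)) ỹ(k−1)` with `e¹(k) = x(k) − x̂¹(k)`,
and the random vectors `x̂(k)` and `x̃(k)` are independent. -/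
theorem stmt4 {nv qv pv : Fin 3 → ℕ} {Ω : Type} [MeasurableSpace Ω]
    (μ : Measure Ω) [IsProbabilityMeasure μ] (N : ℕ)
    (A : Matrix (idx nv) (idx nv) ℝ) (B : Matrix (idx nv) (idx qv) ℝ)
    (C : Matrix (idx pv) (idx nv) ℝ)
    (hA : CyclicSparse A) (hB : BlockDiag B) (hC : BlockDiag C)
    (P0 W : Matrix (idx nv) (idx nv) ℝ) (V : Matrix (idx pv) (idx pv) ℝ)
    (hV : V.PosDef)
    (x0 : Ω → idx nv → ℝ) (w : ℕ → Ω → idx nv → ℝ) (v : ℕ → Ω → idx pv → ℝ)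
    (hnoise : NoiseOK μ N P0 W V x0 w v)
    (F G : ℕ → Matrix (idx qv) (idx pv) ℝ) (Φ : ℕ → ℕ → Matrix (idx qv) (idx pv) ℝ)
    (hadm : Admissible F G)
    (x : ℕ → Ω → idx nv → ℝ) (u : ℕ → Ω → idx qv → ℝ) (y : ℕ → Ω → idx pv → ℝ)
    (hcl : ClosedLoop A B C x0 w v F G Φ x u y) :
    ∀ k ≤ N,
      (1 ≤ k →
        (fun ω => x k ω - (μ[x k | pastSigma y k]) ω) =ᵐ[μ]
          (fun ω => (x k ω - xh1 A B C V W P0 u y k ω) +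
            (B * F (k - 1) + K1mat A C V (Pmat A C V W P0 (k - 1))) *ᵥ
              innov A B C V W P0 u y (k - 1) ω)) ∧
      IndepFun (μ[x k | pastSigma y k]) (fun ω => x k ω - (μ[x k | pastSigma y k]) ω) μ := by
  intro k hk
  rcases Nat.eq_zero_or_pos k with rfl | hpos
  · refine ⟨fun h => absurd h (by norm_num), ?_⟩
    have hbot : pastSigma y 0 = ⊥ := by simp [pastSigma]
    rw [hbot, condExp_bot]
    exact indepFun_const_left _ _
  obtain ⟨m, rfl⟩ : ∃ m, k = m + 1 := ⟨k - 1, by omega⟩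
  have hmN : m < N := hk
  have hL2 := noise_L2 hnoise
  set e : Ω → idx nv → ℝ := fun ω => x m ω - xpred A B C V W P0 u y m ω with he
  have hem : CompIn (noiseSpan x0 w v m) e := err_mem hcl m
  have heN : CompIn (noiseSpan x0 w v N) e := hem.mono (noiseSpan_mono hmN.le)
  have hobs : obsSpan y m ≤ noiseSpan x0 w v N :=
    (xy_mem hcl m).2.trans (noiseSpan_mono hmN.le)
  have hinn : ∀ ω, innov A B C V W P0 u y m ω = C *ᵥ e ω + v m ω := by
    intro ω
    rw [innov, hcl.2.2.1 m ω, he, Matrix.mulVec_sub]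
    abel
  -- the predictable part and the unpredictable part
  set Z : Ω → idx nv → ℝ := fun ω => A *ᵥ xpred A B C V W P0 u y m ω +
    B *ᵥ (F m *ᵥ (C *ᵥ xpred A B C V W P0 u y m ω) + upast G Φ y m ω) with hZ
  set T : Ω → idx nv → ℝ := fun ω => (A *ᵥ e ω + w m ω) +
    (B * F m) *ᵥ (C *ᵥ e ω + v m ω) with hT
  have hZT : ∀ ω, x (m + 1) ω = Z ω + T ω := by
    intro ω
    have hy : y m ω = C *ᵥ xpred A B C V W P0 u y m ω + (C *ᵥ e ω + v m ω) := by
      rw [← hinn ω, innov]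
      abel
    have hx : x m ω = xpred A B C V W P0 u y m ω + e ω := by
      simp [he]
    rw [hcl.2.1 m ω, congrFun (u_eq hcl m) ω, hy]
    simp only [hZ, hT]
    rw [hx]
    simp only [Matrix.mulVec_add, Matrix.mulVec_mulVec, Matrix.mul_assoc]
    abel
  have hZm : CompIn (obsSpan y m) Z := by
    have hp := xpred_mem (V := V) (W := W) (P0 := P0) hcl m
    exact (hp.mulVec A).add ((((hp.mulVec C).mulVec (F m)).add (upast_mem m)).mulVec B)
  have hinnN : CompIn (noiseSpan x0 w v N) (fun ω => C *ᵥ e ω + v m ω) :=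
    (heN.mulVec C).add (noiseSpan_v hmN)
  have hTN : CompIn (noiseSpan x0 w v N) T :=
    ((heN.mulVec A).add (noiseSpan_w hmN)).add (hinnN.mulVec _)
  have hTL := hTN.mono hL2
  have hTy : ∀ j < m, Cov μ T (y j) = 0 := by
    intro j hj
    have heL := heN.mono hL2
    have hwL : CompIn (L2sub μ) (w m) := (noiseSpan_w hmN).mono hL2
    have hvL : CompIn (L2sub μ) (v m) := (noiseSpan_v hmN).mono hL2
    have hyj : CompIn (L2sub μ) (y j) := ((obsSpan_y hj).mono hobs).mono hL2
    have hyn : CompIn (noiseSpan x0 w v m) (y j) := (obsSpan_y hj).mono (xy_mem hcl m).2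
    have h1 : Cov μ (w m) (y j) = 0 := by
      rw [← Cov_transpose, noise_cov_w hnoise hmN hyn, Matrix.transpose_zero]
    have h2 : Cov μ (v m) (y j) = 0 := by
      rw [← Cov_transpose, noise_cov_v hnoise hmN hyn, Matrix.transpose_zero]
    have h3 := (kalman_inv hV hnoise hcl m hmN.le).2 j hj
    rw [hT, Cov_add_left ((heL.mulVec A).add hwL) ((hinnN.mono hL2).mulVec _) hyj,
      Cov_mul_left (hinnN.mono hL2) hyj, Cov_add_left (heL.mulVec A) hwL hyj,
      Cov_add_left (heL.mulVec C) hvL hyj, Cov_mul_left heL hyj, Cov_mul_left heL hyj, h3, h1, h2]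
    simp
  -- independence of the unpredictable part and the observations
  let Yv : Ω → (Fin m × idx pv) → ℝ := fun ω a => y a.1 ω a.2
  have hYN : CompIn (noiseSpan x0 w v N) Yv := fun a => hobs (obsSpan_y a.1.2 a.2)
  have hind : IndepFun T Yv μ := by
    refine HasGaussianLaw.indepFun_of_covariance_eval (X := fun i ω => T ω i)
      (Y := fun a ω => Yv ω a) (noise_gauss hnoise hTN hYN) fun i a => ?_
    rw [covariance_eq_sub (hTL i) (hL2 (hYN a))]
    have h1 := congrFun (congrFun (hTy a.1 a.1.2) i) a.2
    have h2 := (noise_mean hnoise (hTN i)).2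
    simp only [mul_one] at h2
    rw [h2, zero_mul, sub_zero]
    exact h1
  have hpast : pastSigma y (m + 1) ≤ MeasurableSpace.comap Yv inferInstance := by
    refine iSup₂_le fun j hj => ?_
    have hj' : j < m := by simpa using hj
    have : y j = (fun (z : (Fin m × idx pv) → ℝ) i => z (⟨j, hj'⟩, i)) ∘ Yv := rfl
    rw [this, ← MeasurableSpace.comap_comp]
    refine MeasurableSpace.comap_mono ?_
    exact Measurable.comap_le (by fun_prop)
  have hyp : ∀ j < m, Measurable[pastSigma y (m + 1)] (y j) := by
    intro j hj
    refine Measurable.of_comap_le ?_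
    exact le_iSup₂_of_le (f := fun j (_ : j ∈ Finset.range (m + 1 - 1)) =>
      MeasurableSpace.comap (y j) inferInstance) j (by simpa using hj) le_rfl
  have hZp : Measurable[pastSigma y (m + 1)] Z := by
    have hle : obsSpan y m ≤ MeasSub (pastSigma y (m + 1)) :=
      obsSpan_le fun j hj i => (measurable_pi_apply i).comp (hyp j hj)
    exact @measurable_pi_lambda _ _ _ (pastSigma y (m + 1)) _ _ fun i => hle (hZm i)
  have hYmeas : Measurable Yv := measurable_pi_lambda _ fun a => noise_meas hnoise (hYN a)
  have hTmeas : Measurable T := measurable_pi_lambda _ fun a => noise_meas hnoise (hTN a)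
  have hpastle : pastSigma y (m + 1) ≤ ‹MeasurableSpace Ω› := hpast.trans hYmeas.comap_le
  have hI : Indep (MeasurableSpace.comap T inferInstance) (pastSigma y (m + 1)) μ :=
    indep_of_indep_of_le_right hind hpast
  have hTint : Integrable T μ := (MemLp.of_eval (p := 2) hTL).integrable (by norm_num)
  have hZint : Integrable Z μ :=
    (MemLp.of_eval (p := 2) ((hZm.mono hobs).mono hL2)).integrable (by norm_num)
  have hTmean : ∫ ω, T ω ∂μ = 0 := by
    ext i
    rw [eval_integral fun i => hTint.eval i]
    simpa using (noise_mean hnoise (hTN i)).2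
  have hTce : μ[T | pastSigma y (m + 1)] =ᵐ[μ] fun _ => 0 := by
    have := condExp_indep_eq hTmeas.comap_le hpastle
      (Measurable.stronglyMeasurable (comap_measurable T)) hI
    rwa [hTmean] at this
  have hxZT : x (m + 1) = Z + T := funext hZT
  have hce : μ[x (m + 1) | pastSigma y (m + 1)] =ᵐ[μ] Z := by
    rw [hxZT]
    refine (condExp_add hZint hTint _).trans ?_
    rw [condExp_of_stronglyMeasurable hpastle hZp.stronglyMeasurable hZint]
    filter_upwards [hTce] with ω hω
    simp [hω]
  have hres : (fun ω => x (m + 1) ω - (μ[x (m + 1) | pastSigma y (m + 1)]) ω) =ᵐ[μ] T := by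
    filter_upwards [hce] with ω hω
    rw [hω, hZT ω]
    abel
  refine ⟨fun _ => ?_, ?_⟩
  · refine hres.trans (Filter.Eventually.of_forall fun ω => ?_)
    simp only [Nat.add_sub_cancel, xh1, hinn]
    have hx : x m ω = xpred A B C V W P0 u y m ω + e ω := by
      simp [he]
    rw [hcl.2.1 m ω, hx]
    simp only [hT, Matrix.mulVec_add, Matrix.add_mulVec]
    abel
  · have hTZ : IndepFun Z T μ :=
      indep_of_indep_of_le_left hI.symm hZp.comap_le
    exact hTZ.congr hce.symm hres.symm

end
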